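/- For every unconstrained coefficient vector β ∈ ℝ^D, the transformation H is twice continuously differentiable on all of ℝ; in particular, the transition from the spline segment on [k_1, k_m] to the identity function outside [k_1, k_m] is continuous and C². -/

import Mathlib

open MeasureTheory Finset

noncomputable section

/-- The cardinal cubic B-spline. -/
def cubicN (t : ℝ) : ℝ :=
  if 0 ≤ t ∧ t < 1 then t ^ 3 / 6
  else if 1 ≤ t ∧ t < 2 then (-3 * t ^ 3 + 12 * t ^ 2 - 12 * t + 4) / 6
  else if 2 ≤ t ∧ t < 3 then (3 * t ^ 3 - 24 * t ^ 2 + 60 * t - 44) / 6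
  else if 3 ≤ t ∧ t ≤ 4 then (4 - t) ^ 3 / 6
  else 0

/-- Equidistant knots `k_j = k0 + j·k`. -/
def knot (k0 k : ℝ) (j : ℤ) : ℝ := k0 + (j : ℝ) * k

/-- Cubic B-spline basis functions `B_j(x) = N((x − k_{j−3})/k)` for `j = 1, …, J`. -/
def Bspl (k0 k : ℝ) (j : ℕ) (x : ℝ) : ℝ := cubicN ((x - knot k0 k ((j : ℤ) - 3)) / k)

/-- The coefficients `γ_1, …, γ_J` (with `J = D + 7`, `m = D + 5`), defined from the
unconstrained vector `β ∈ ℝ^D`. -/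
def gam (D : ℕ) (k0 k : ℝ) (β : Fin D → ℝ) (j : ℕ) : ℝ :=
  if j = 1 then k0
  else if j = 2 ∨ j = 3 ∨ j = 4 ∨ j = D + 5 ∨ j = D + 6 ∨ j = D + 7 then Real.log k
  else if h : 5 ≤ j ∧ j ≤ D + 4 then
    β ⟨j - 5, by omega⟩ - Real.log ((∑ d, Real.exp (β d)) / ((D : ℝ) * k))
  else 0

/-- The transformation `H`: a cubic B-spline with coefficients
`γ_1 + ∑_{ℓ=2}^j exp(γ_ℓ)` on `[k_1, k_m]` (with `m = D + 5`), and the identity outside. -/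
def Hfun (D : ℕ) (k0 k : ℝ) (β : Fin D → ℝ) (x : ℝ) : ℝ :=
  if knot k0 k 1 ≤ x ∧ x ≤ knot k0 k ((D : ℤ) + 5) then
    ∑ j ∈ Finset.Icc 1 (D + 7),
      Bspl k0 k j x * (gam D k0 k β 1 + ∑ l ∈ Finset.Icc 2 j, Real.exp (gam D k0 k β l))
  else x


/-!
The cubic B-spline is a fourth difference of the truncated cube `t⁺ ^ 3`, so every B-spline
expansion is `C²` and only the two gluing points `k_1` and `k_m` need attention. On one knot
interval just four B-splines are active, and since they satisfy `∑ N(u + i) = 1` and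
`∑ i N(u + i) = 2 - u`, a spline whose four active coefficients are the knots `k_{j-1}` is the
identity there. The coefficients of `H` have this form on the first interval by the choice of
`γ_1, …, γ_4`, and on the last one because the normalisation of `β` makes the interior increments
sum to `D k`. Hence `H` is the identity near both gluing points.
-/

section Gluing

open scoped Topology

theorem contDiff_piecewise_of_eventuallyEq_frontier {𝕜 E F : Type*} [NontriviallyNormedField 𝕜]
    [NormedAddCommGroup E] [NormedSpace 𝕜 E] [NormedAddCommGroup F] [NormedSpace 𝕜 F]
    {n : WithTop ℕ∞} {s : Set E} [DecidablePred (· ∈ s)] {f g : E → F}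
    (hf : ContDiff 𝕜 n f) (hg : ContDiff 𝕜 n g) (hfg : ∀ x ∈ frontier s, f =ᶠ[𝓝[s] x] g) :
    ContDiff 𝕜 n (s.piecewise f g) := by
  rw [contDiff_iff_contDiffAt]
  intro x
  by_cases hx : x ∈ frontier s
  · refine hg.contDiffAt.congr_of_eventuallyEq ?_
    filter_upwards [eventually_nhdsWithin_iff.1 (hfg x hx)] with y hy
    by_cases hys : y ∈ s
    · rw [Set.piecewise_eq_of_mem _ _ _ hys, hy hys]
    · rw [Set.piecewise_eq_of_notMem _ _ _ hys]
  · have interior_or : x ∈ interior s ∪ interior sᶜ := by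
      rwa [← compl_frontier_eq_union_interior]
    rcases interior_or with hxs | hxs
    · refine hf.contDiffAt.congr_of_eventuallyEq ?_
      filter_upwards [mem_interior_iff_mem_nhds.1 hxs] with y hy
      exact Set.piecewise_eq_of_mem _ _ _ hy
    · refine hg.contDiffAt.congr_of_eventuallyEq ?_
      filter_upwards [mem_interior_iff_mem_nhds.1 hxs] with y hy
      exact Set.piecewise_eq_of_notMem _ _ _ hy

end Gluing

section TruncatedPower

theorem hasDerivAt_posPart_pow {n : ℕ} (hn : 1 < n) (t : ℝ) :
    HasDerivAt (fun t : ℝ => t⁺ ^ n) (n * t⁺ ^ (n - 1)) t := by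
  have cont (i : ℕ) : Continuous fun t : ℝ => t⁺ ^ i := continuous_posPart.pow i
  refine hasDerivAt_of_hasDerivAt_of_ne' (x := 0) (g := fun t => n * t⁺ ^ (n - 1)) ?_
    (cont n).continuousAt (continuous_const.mul (cont (n - 1))).continuousAt t
  intro t ht
  rcases ht.lt_or_gt with ht | ht
  · rw [posPart_eq_zero.2 ht.le, zero_pow (by lia), mul_zero]
    refine (hasDerivAt_const t (0 : ℝ)).congr_of_eventuallyEq ?_
    filter_upwards [Iio_mem_nhds ht] with y hy
    rw [posPart_eq_zero.2 (Set.mem_Iio.1 hy).le, zero_pow (by lia)]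
  · rw [posPart_eq_self.2 ht.le]
    refine (hasDerivAt_pow n t).congr_of_eventuallyEq ?_
    filter_upwards [Ioi_mem_nhds ht] with y hy
    rw [posPart_eq_self.2 (Set.mem_Ioi.1 hy).le]

theorem contDiff_posPart_pow_succ (n : ℕ) : ContDiff ℝ n fun t : ℝ => t⁺ ^ (n + 1) := by
  induction n with
  | zero => simpa using continuous_posPart
  | succ n ih =>
    have hderiv (t : ℝ) := hasDerivAt_posPart_pow (n := n + 2) (by lia) t
    rw [Nat.cast_add_one, contDiff_succ_iff_deriv]
    refine ⟨fun t => (hderiv t).differentiableAt, by simp, ?_⟩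
    rw [deriv_eq hderiv]
    exact contDiff_const.mul ih

end TruncatedPower

section CardinalBSpline

theorem cubicN_eq_sum_posPart (t : ℝ) :
    cubicN t = (∑ i ∈ range 5, (-1) ^ i * (Nat.choose 4 i : ℝ) * (t - i)⁺ ^ 3) / 6 := by
  norm_num only [sum_range_succ, sum_range_zero, posPart_def, Nat.choose]
  grind [cubicN]

theorem contDiff_cubicN : ContDiff ℝ 2 cubicN := by
  rw [funext cubicN_eq_sum_posPart]
  refine (ContDiff.sum fun i _ => contDiff_const.mul ?_).div_const 6
  exact (contDiff_posPart_pow_succ 2).comp (contDiff_id.sub contDiff_const)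

theorem cubicN_of_nonpos {t : ℝ} (ht : t ≤ 0) : cubicN t = 0 := by
  grind [cubicN]

theorem cubicN_of_four_le {t : ℝ} (ht : 4 ≤ t) : cubicN t = 0 := by
  rcases ht.eq_or_lt with rfl | ht
  · norm_num [cubicN]
  · grind [cubicN]

theorem sum_cubicN_add_natCast {u : ℝ} (hu : u ∈ Set.Icc 0 1) :
    ∑ i ∈ range 4, cubicN (u + i) = 1 := by
  norm_num only [sum_range_succ, sum_range_zero]
  grind [cubicN]

theorem sum_natCast_mul_cubicN_add_natCast {u : ℝ} (hu : u ∈ Set.Icc 0 1) :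
    ∑ i ∈ range 4, i * cubicN (u + i) = 2 - u := by
  norm_num only [sum_range_succ, sum_range_zero]
  grind [cubicN]

end CardinalBSpline

section CubicSpline

variable {k0 k : ℝ}

/-- The cubic spline on the equidistant knots with control coefficients `c`, as a B-spline expansion
over the indices in `s`. -/
def cubicSpline (k0 k : ℝ) (s : Finset ℕ) (c : ℕ → ℝ) (x : ℝ) : ℝ :=
  ∑ j ∈ s, Bspl k0 k j x * c j

theorem contDiff_Bspl (k0 k : ℝ) (j : ℕ) : ContDiff ℝ 2 (Bspl k0 k j) :=
  contDiff_cubicN.comp ((contDiff_id.sub contDiff_const).div_const k)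

theorem contDiff_cubicSpline (k0 k : ℝ) (s : Finset ℕ) (c : ℕ → ℝ) :
    ContDiff ℝ 2 (cubicSpline k0 k s c) :=
  ContDiff.sum fun j _ => (contDiff_Bspl k0 k j).mul contDiff_const

theorem knot_lt_knot (hk : 0 < k) {i j : ℤ} (hij : i < j) : knot k0 k i < knot k0 k j := by
  unfold knot
  gcongr

theorem Bspl_knot_add_mul (hk : k ≠ 0) (i : ℤ) (j : ℕ) (u : ℝ) :
    Bspl k0 k j (knot k0 k i + u * k) = cubicN (u + (i - j + 3)) := by
  unfold Bspl knot
  congr 1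
  push_cast
  field_simp
  ring

theorem exists_eq_knot_add_mul (hk : 0 < k) {i : ℤ} {x : ℝ}
    (hx : x ∈ Set.Icc (knot k0 k i) (knot k0 k (i + 1))) :
    ∃ u ∈ Set.Icc (0 : ℝ) 1, x = knot k0 k i + u * k := by
  have knot_succ : knot k0 k (i + 1) = knot k0 k i + k := by
    unfold knot
    push_cast
    ring
  refine ⟨(x - knot k0 k i) / k, ⟨div_nonneg (sub_nonneg.2 hx.1) hk.le, ?_⟩, ?_⟩
  · rw [div_le_one hk]
    linarith [hx.2]
  · field_simp
    ring

theorem sum_Icc_Bspl_mul_knot (hk : 0 < k) (n : ℕ) {x : ℝ}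
    (hx : x ∈ Set.Icc (knot k0 k (n + 1)) (knot k0 k (n + 1 + 1))) :
    ∑ j ∈ Icc (n + 1) (n + 4), Bspl k0 k j x * knot k0 k (j - 1) = x := by
  obtain ⟨u, hu, rfl⟩ := exists_eq_knot_add_mul hk hx
  have partition_of_unity := sum_cubicN_add_natCast hu
  have first_moment := sum_natCast_mul_cubicN_add_natCast hu
  calc
    _ = ∑ i ∈ range 4, cubicN (u + i) * knot k0 k (n + 3 - i) := by
      refine sum_bij' (fun j _ => n + 4 - j) (fun i _ => n + 4 - i) ?_ ?_ ?_ ?_ ?_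
      · grind
      · grind
      · grind
      · grind
      · intro j hj
        rw [mem_Icc] at hj
        rw [Bspl_knot_add_mul hk.ne', Nat.cast_sub hj.2, Nat.cast_sub hj.2]
        push_cast
        congr 2 <;> ring
    _ = knot k0 k (n + 3) * ∑ i ∈ range 4, cubicN (u + i)
        - k * ∑ i ∈ range 4, i * cubicN (u + i) := by
      rw [mul_sum, mul_sum, ← sum_sub_distrib]
      refine sum_congr rfl fun i _ => ?_
      unfold knot
      push_cast
      ring
    _ = knot k0 k (n + 1) + u * k := by
      rw [partition_of_unity, first_moment]
      unfold knot
      push_cast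
      ring

theorem Bspl_eq_zero_of_notMem_Icc (hk : 0 < k) {n j : ℕ} (hj : j ∉ Icc (n + 1) (n + 4)) {x : ℝ}
    (hx : x ∈ Set.Icc (knot k0 k (n + 1)) (knot k0 k (n + 1 + 1))) : Bspl k0 k j x = 0 := by
  obtain ⟨u, ⟨hu0, hu1⟩, rfl⟩ := exists_eq_knot_add_mul hk hx
  rw [Bspl_knot_add_mul hk.ne']
  push_cast
  rcases (by grind : j ≤ n ∨ n + 5 ≤ j) with hjn | hnj
  · have : (j : ℝ) ≤ n := by exact_mod_cast hjn
    exact cubicN_of_four_le (by linarith)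
  · have : (n : ℝ) + 5 ≤ j := by exact_mod_cast hnj
    exact cubicN_of_nonpos (by linarith)

theorem cubicSpline_eq_self (hk : 0 < k) {s : Finset ℕ} {c : ℕ → ℝ} {n : ℕ}
    (hs : Icc (n + 1) (n + 4) ⊆ s) (hc : ∀ j ∈ Icc (n + 1) (n + 4), c j = knot k0 k (j - 1)) {x : ℝ}
    (hx : x ∈ Set.Icc (knot k0 k (n + 1)) (knot k0 k (n + 1 + 1))) :
    cubicSpline k0 k s c x = x := by
  calc
    cubicSpline k0 k s c x = ∑ j ∈ Icc (n + 1) (n + 4), Bspl k0 k j x * c j := by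
      refine (sum_subset hs fun j _ hj => ?_).symm
      rw [Bspl_eq_zero_of_notMem_Icc hk hj hx, zero_mul]
    _ = ∑ j ∈ Icc (n + 1) (n + 4), Bspl k0 k j x * knot k0 k (j - 1) :=
      sum_congr rfl fun j hj => by rw [hc j hj]
    _ = x := sum_Icc_Bspl_mul_knot hk n hx

end CubicSpline

section Coefficients

theorem sum_exp_sub_log_sum_exp_div {ι : Type*} [Fintype ι] [Nonempty ι] (β : ι → ℝ) {c : ℝ}
    (hc : 0 < c) : ∑ i, Real.exp (β i - Real.log ((∑ d, Real.exp (β d)) / c)) = c := by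
  have sum_pos : 0 < ∑ d, Real.exp (β d) :=
    Finset.sum_pos (fun d _ => Real.exp_pos _) univ_nonempty
  simp only [Real.exp_sub, Real.exp_log (div_pos sum_pos hc), ← sum_div]
  field_simp

variable {D : ℕ} {k0 k : ℝ} {β : Fin D → ℝ}

theorem exp_gam_of_boundary (hk : 0 < k) {j : ℕ}
    (hj : j ∈ Ioc 1 4 ∪ Ioc (D + 4) (D + 7)) : Real.exp (gam D k0 k β j) = k := by
  simp only [mem_union, mem_Ioc] at hj
  rw [gam, if_neg (by lia), if_pos (by lia), Real.exp_log hk]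

theorem gam_fin_add_five (i : Fin D) :
    gam D k0 k β (5 + i) = β i - Real.log ((∑ d, Real.exp (β d)) / (D * k)) := by
  rw [gam, if_neg (by lia), if_neg (by lia), dif_pos (by lia)]
  simp

theorem sum_Ioc_exp_gam (hD : 1 ≤ D) (hk : 0 < k) :
    ∑ l ∈ Ioc 4 (D + 4), Real.exp (gam D k0 k β l) = D * k := by
  have : Nonempty (Fin D) := ⟨⟨0, hD⟩⟩
  rw [← Ico_add_one_add_one_eq_Ioc, sum_Ico_eq_sum_range, Nat.add_sub_add_right,
    Nat.add_sub_cancel, sum_range]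
  simp only [Nat.reduceAdd, gam_fin_add_five]
  exact sum_exp_sub_log_sum_exp_div β (by positivity)

/-- The B-spline coefficient `γ_1 + ∑_{ℓ=2}^j exp(γ_ℓ)` of the transformation `H`. -/
def splineCoeff (D : ℕ) (k0 k : ℝ) (β : Fin D → ℝ) (j : ℕ) : ℝ :=
  gam D k0 k β 1 + ∑ l ∈ Icc 2 j, Real.exp (gam D k0 k β l)

theorem splineCoeff_add_sum_Ioc {i j : ℕ} (hi : 1 ≤ i) (hij : i ≤ j) :
    splineCoeff D k0 k β i + ∑ l ∈ Ioc i j, Real.exp (gam D k0 k β l) = splineCoeff D k0 k β j := by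
  have Icc_two (n : ℕ) : Icc 2 n = Ioc 1 n := Icc_add_one_left_eq_Ioc 1 n
  rw [splineCoeff, splineCoeff, Icc_two, Icc_two, add_assoc, sum_Ioc_consecutive _ hi hij]

theorem splineCoeff_eq_knot_of_exp_gam {i j : ℕ} (hi : 1 ≤ i) (hij : i ≤ j)
    (hci : splineCoeff D k0 k β i = knot k0 k (i - 1))
    (hstep : ∀ l ∈ Ioc i j, Real.exp (gam D k0 k β l) = k) :
    splineCoeff D k0 k β j = knot k0 k (j - 1) := by
  rw [← splineCoeff_add_sum_Ioc hi hij, hci, sum_congr rfl hstep, sum_const, Nat.card_Ioc,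
    nsmul_eq_mul, Nat.cast_sub hij]
  unfold knot
  push_cast
  ring

theorem splineCoeff_eq_knot_of_mem_Icc_lower (hk : 0 < k) {j : ℕ} (hj : j ∈ Icc 1 4) :
    splineCoeff D k0 k β j = knot k0 k (j - 1) := by
  have splineCoeff_one : splineCoeff D k0 k β 1 = knot k0 k ((1 : ℕ) - 1) := by
    simp [splineCoeff, gam, knot]
  rw [mem_Icc] at hj
  exact splineCoeff_eq_knot_of_exp_gam le_rfl hj.1 splineCoeff_one
    fun l hl => exp_gam_of_boundary hk (by grind)

theorem splineCoeff_eq_knot_of_mem_Icc_upper (hD : 1 ≤ D) (hk : 0 < k) {j : ℕ}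
    (hj : j ∈ Icc (D + 4) (D + 7)) : splineCoeff D k0 k β j = knot k0 k (j - 1) := by
  have splineCoeff_upper : splineCoeff D k0 k β (D + 4) = knot k0 k ((D + 4 : ℕ) - 1) := by
    rw [← splineCoeff_add_sum_Ioc (i := 4) (by lia) (by lia), sum_Ioc_exp_gam hD hk,
      splineCoeff_eq_knot_of_mem_Icc_lower hk (by simp)]
    unfold knot
    push_cast
    ring
  rw [mem_Icc] at hj
  exact splineCoeff_eq_knot_of_exp_gam (by lia) hj.1 splineCoeff_upper
    fun l hl => exp_gam_of_boundary hk (by grind)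

end Coefficients

section Transformation

variable {D : ℕ} {k0 k : ℝ} {β : Fin D → ℝ}

theorem Hfun_eq_piecewise (D : ℕ) (k0 k : ℝ) (β : Fin D → ℝ) :
    Hfun D k0 k β = (Set.Icc (knot k0 k 1) (knot k0 k (D + 5))).piecewise
      (cubicSpline k0 k (Icc 1 (D + 7)) (splineCoeff D k0 k β)) id := by
  ext x
  simp only [Hfun, Set.piecewise, Set.mem_Icc, cubicSpline, splineCoeff, id]

theorem cubicSpline_splineCoeff_eqOn_first (hk : 0 < k) :
    Set.EqOn (cubicSpline k0 k (Icc 1 (D + 7)) (splineCoeff D k0 k β)) id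
      (Set.Icc (knot k0 k 1) (knot k0 k 2)) := fun x hx =>
  cubicSpline_eq_self (n := 0) hk (Icc_subset_Icc le_rfl (by lia))
    (fun _ hj => splineCoeff_eq_knot_of_mem_Icc_lower hk hj) (by simpa using hx)

theorem cubicSpline_splineCoeff_eqOn_last (hD : 1 ≤ D) (hk : 0 < k) :
    Set.EqOn (cubicSpline k0 k (Icc 1 (D + 7)) (splineCoeff D k0 k β)) id
      (Set.Icc (knot k0 k (D + 4)) (knot k0 k (D + 5))) := fun x hx =>
  cubicSpline_eq_self (n := D + 3) hk (Icc_subset_Icc (by lia) (by lia))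
    (fun _ hj => splineCoeff_eq_knot_of_mem_Icc_upper hD hk hj)
    (by convert hx using 3 <;> push_cast <;> ring)

end Transformation

/-- For every `β ∈ ℝ^D`, the transformation `H` is twice continuously
differentiable on all of `ℝ`; in particular the transition from the spline segment on
`[k_1, k_m]` to the identity outside is continuous and `C²`. -/
theorem H_contDiff_two (D : ℕ) (hD : 1 ≤ D) (k0 k : ℝ) (hk : 0 < k)
    (β : Fin D → ℝ) :
    ContDiff ℝ 2 (Hfun D k0 k β) := by
  rw [Hfun_eq_piecewise]
  refine contDiff_piecewise_of_eventuallyEq_frontier (contDiff_cubicSpline _ _ _ _) contDiff_id ?_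
  have first_lt : knot k0 k 1 < knot k0 k 2 := knot_lt_knot hk (by lia)
  have last_lt : knot k0 k (D + 4) < knot k0 k (D + 5) := knot_lt_knot hk (by lia)
  rw [frontier_Icc (knot_lt_knot hk (by lia)).le]
  rintro x (rfl | rfl)
  · have first_mem := Icc_mem_nhdsGE first_lt
    exact (cubicSpline_splineCoeff_eqOn_first hk).eventuallyEq_of_mem
      (nhdsWithin_mono _ Set.Icc_subset_Ici_self first_mem)
  · have last_mem := Icc_mem_nhdsLE last_lt
    exact (cubicSpline_splineCoeff_eqOn_last hD hk).eventuallyEq_of_mem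
      (nhdsWithin_mono _ Set.Icc_subset_Iic_self last_mem)

end
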